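/- Let F : ℝ → ℝ be real analytic on all of ℝ, and suppose there is a nonempty open set U ⊆ ℝ such that 2·F(x) = x·F'(x) for every x ∈ U. Then there exists a constant c ∈ ℝ (namely c = F(1)) such that F(x) = c·x² for every x ∈ ℝ. -/

import Mathlib

/-!
Euler's identity `n • f x = x • f' x` passes from a set with an accumulation point to the whole
domain by the identity theorem. Away from the origin it says exactly that `x⁻ⁿ • f x` has zero
derivative, so `f` is a multiple of `xⁿ` near any point `p ≠ 0`. Since `xⁿ` is analytic at the
origin as well, a second use of the identity theorem extends this to the whole domain, on the real
line also across `0`, where the equation is singular.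
-/

open Filter Set
open scoped Topology

section NontriviallyNormedField

variable {𝕜 E : Type*} [NontriviallyNormedField 𝕜] [NormedAddCommGroup E] [NormedSpace 𝕜 E]

/-- The scaling excess `a f − x f'` of degree `a`, whose vanishing is Euler's identity for functions
homogeneous of degree `a`; degree `2` gives the expression `2F − H·F_H`. -/
noncomputable def scalingExcess (a : 𝕜) (f : 𝕜 → E) (x : 𝕜) : E :=
  a • f x - x • deriv f x

theorem scalingExcess_eq_zero_iff {a : 𝕜} {f : 𝕜 → E} {x : 𝕜} :
    scalingExcess a f x = 0 ↔ a • f x = x • deriv f x :=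
  sub_eq_zero

theorem analyticOnNhd_scalingExcess [CompleteSpace E] {f : 𝕜 → E} {U : Set 𝕜}
    (hf : AnalyticOnNhd 𝕜 f U) (a : 𝕜) : AnalyticOnNhd 𝕜 (scalingExcess a f) U :=
  (analyticOnNhd_const.smul hf).sub (analyticOnNhd_id.smul hf.deriv)

theorem hasDerivAt_zpow_neg_smul {f : 𝕜 → E} {x : 𝕜} (hf : DifferentiableAt 𝕜 f x) (hx : x ≠ 0)
    (m : ℤ) :
    HasDerivAt (fun y => y ^ (-m) • f y) (-(x ^ (-m - 1) • scalingExcess (m : 𝕜) f x)) x := by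
  refine ((hasDerivAt_zpow (-m) x (.inl hx)).smul hf.hasDerivAt).congr_deriv ?_
  have hpow : x ^ (-m) = x ^ (-m - 1) * x := by
    rw [← zpow_add_one₀ hx, sub_add_cancel]
  rw [scalingExcess, hpow, Int.cast_neg]
  module

end NontriviallyNormedField

section RCLike

variable {𝕜 E : Type*} [RCLike 𝕜] [NormedAddCommGroup E] [NormedSpace 𝕜 E]

theorem eqOn_zpow_smul_of_scalingExcess_eq_zero {f : 𝕜 → E} {V : Set 𝕜} {p : 𝕜} {m : ℤ}
    (hV : IsOpen V) (hVc : IsPreconnected V) (hV0 : 0 ∉ V) (hf : DifferentiableOn 𝕜 f V)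
    (hexcess : ∀ x ∈ V, scalingExcess (m : 𝕜) f x = 0) (hp : p ∈ V) :
    EqOn f (fun x => (x / p) ^ m • f p) V := by
  have hderiv : ∀ x ∈ V, HasDerivAt (fun y => y ^ (-m) • f y) 0 x := fun x hx => by
    have hfx : DifferentiableAt 𝕜 f x := hf.differentiableAt (hV.mem_nhds hx)
    simpa only [hexcess x hx, smul_zero, neg_zero] using
      hasDerivAt_zpow_neg_smul hfx (ne_of_mem_of_not_mem hx hV0) m
  intro x hx
  have hconst : x ^ (-m) • f x = p ^ (-m) • f p :=
    hV.is_const_of_deriv_eq_zero hVc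
      (fun y hy => (hderiv y hy).differentiableAt.differentiableWithinAt)
      (fun y hy => (hderiv y hy).deriv) hx hp
  have hx0 : x ^ m ≠ 0 := zpow_ne_zero m (ne_of_mem_of_not_mem hx hV0)
  calc
    f x = x ^ m • x ^ (-m) • f x := by rw [zpow_neg, smul_inv_smul₀ hx0]
    _ = (x / p) ^ m • f p := by rw [hconst, smul_smul, zpow_neg, div_zpow, div_eq_mul_inv]

theorem eventuallyEq_zpow_smul_of_scalingExcess_eq_zero {f : 𝕜 → E} {p : 𝕜} {m : ℤ} (hp : p ≠ 0)
    (hf : ∀ᶠ x in 𝓝 p, DifferentiableAt 𝕜 f x)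
    (hexcess : ∀ᶠ x in 𝓝 p, scalingExcess (m : 𝕜) f x = 0) :
    f =ᶠ[𝓝 p] fun x => (x / p) ^ m • f p := by
  obtain ⟨ε, hε, hball⟩ := Metric.eventually_nhds_iff_ball.1
    ((hf.and hexcess).and (eventually_ne_nhds hp))
  exact (eqOn_zpow_smul_of_scalingExcess_eq_zero Metric.isOpen_ball
    (convex_ball p ε).isPreconnected (fun h => (hball 0 h).2 rfl)
    (fun x hx => (hball x hx).1.1.differentiableWithinAt) (fun x hx => (hball x hx).1.2)
    (Metric.mem_ball_self hε)).eventuallyEq_of_mem (Metric.ball_mem_nhds p hε)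

theorem analytic_euler_on_open_set_implies_quadratic_general [CompleteSpace E] {f : 𝕜 → E}
    {U : Set 𝕜} {z p : 𝕜} {n : ℕ} (hf : AnalyticOnNhd 𝕜 f U) (hU : IsOpen U)
    (hUc : IsPreconnected U) (hz : z ∈ U)
    (hexcess : ∃ᶠ x in 𝓝[≠] z, scalingExcess (n : 𝕜) f x = 0) (hp : p ∈ U) (hp0 : p ≠ 0) :
    EqOn f (fun x => (x / p) ^ n • f p) U := by
  have hEuler : ∀ x ∈ U, scalingExcess (n : 𝕜) f x = 0 := fun x hx =>
    (analyticOnNhd_scalingExcess hf n).eqOn_zero_of_preconnected_of_frequently_eq_zero hUc hz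
      hexcess hx
  have hnear : f =ᶠ[𝓝 p] fun x => (x / p) ^ n • f p := by
    have hUp : U ∈ 𝓝 p := hU.mem_nhds hp
    simpa only [zpow_natCast] using eventuallyEq_zpow_smul_of_scalingExcess_eq_zero (m := n) hp0
      (eventually_of_mem hUp fun x hx => (hf x hx).differentiableAt)
      (eventually_of_mem hUp fun x hx => by simpa only [Int.cast_natCast] using hEuler x hx)
  have hpow : AnalyticOnNhd 𝕜 (fun x => (x / p) ^ n • f p) U :=
    ((analyticOnNhd_id.div_const).pow n).smul analyticOnNhd_const
  exact hf.eqOn_of_preconnected_of_eventuallyEq hpow hUc hp hnear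

end RCLike

/-- If `F : ℝ → ℝ` is real analytic on all of `ℝ` and its scaling excess
`2F(x) − x·F'(x)` vanishes on a nonempty open set `U`, then `F(x) = c·x²`
for all `x`, with `c = F(1)`. -/
theorem analytic_euler_on_open_set_implies_quadratic (F : ℝ → ℝ)
    (hF : AnalyticOnNhd ℝ F Set.univ)
    (U : Set ℝ) (hU : IsOpen U) (hUne : U.Nonempty)
    (hEuler : ∀ x ∈ U, 2 * F x = x * deriv F x) :
    ∃ c : ℝ, c = F 1 ∧ ∀ x : ℝ, F x = c * x ^ 2 := by
  obtain ⟨z, hz⟩ := hUne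
  have hexcess : ∀ᶠ x in 𝓝 z, scalingExcess ((2 : ℕ) : ℝ) F x = 0 :=
    eventually_of_mem (hU.mem_nhds hz) fun x hx => scalingExcess_eq_zero_iff.2 (hEuler x hx)
  have hquad := analytic_euler_on_open_set_implies_quadratic_general hF isOpen_univ
    isPreconnected_univ (mem_univ z) (hexcess.filter_mono nhdsWithin_le_nhds).frequently
    (mem_univ 1) one_ne_zero
  refine ⟨F 1, rfl, fun x => ?_⟩
  simpa only [div_one, smul_eq_mul, mul_comm] using hquad (mem_univ x)
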